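/- arXiv:1507.01712 — 2 statements merged into one kernel-verified Lean document; each statement's English description precedes it below -/
import Mathlib

section
/- Let n ≥ 1 be an integer, μ > 0, β > 0, σ > 0. For every τ ∈ ℝ, the function h ↦ e^{iτh} (σ²/Γ(2β)) ∫₀^∞ w^{2β−1} e^{−μw} u_{2n}(h,w) dw is integrable on ℝ and ∫_ℝ e^{iτh} [(σ²/Γ(2β)) ∫₀^∞ w^{2β−1} e^{−μw} u_{2n}(h,w) dw] dh = σ²/(μ + τ^{2n})^{2β}. (This is the spectral function of the solution to (μ + (−1)^n d^{2n}/dt^{2n})^β X(t) = E(t), where E is Gaussian white noise of intensity σ².) -/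
open MeasureTheory Set Real

/-- The even-order heat kernel `u_{2n}(x,w) = (1/(2π)) ∫_ℝ exp(−iξx − wξ^{2n}) dξ`. -/
noncomputable def u2n (n : ℕ) (x w : ℝ) : ℂ :=
  ((2 * Real.pi)⁻¹ : ℝ) *
    ∫ ξ : ℝ, Complex.exp (-(Complex.I * ξ * x) - ((w * ξ ^ (2 * n) : ℝ) : ℂ))

/-!
In the `h` variable, `u_{2n}(·, w)` is the inverse Fourier transform of the symbol
`exp (-w ξ^{2n})`. The symbol is smooth with integrable derivatives, so its transform is integrable,
and Fourier inversion gives `∫ e^{iτh} u_{2n}(h, w) dh = exp (-w τ^{2n})`. Since all the symbols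
with `w > 0` are dilations of one another, `‖u_{2n}(·, w)‖₁` does not depend on `w`. Hence Fubini
applies to the mixture over `w` with the integrable weight `w^{2β-1} e^{-μw}`, which leaves the
Gamma integral `∫₀^∞ w^{2β-1} e^{-(μ + τ^{2n}) w} dw = Γ(2β) / (μ + τ^{2n})^{2β}`.
-/

open FourierTransform Polynomial

section Fourier

variable {E : Type*} [NormedAddCommGroup E] [NormedSpace ℂ E]

lemma fourier_comp_mul_left (f : ℝ → E) {s : ℝ} (hs : s ≠ 0) (ξ : ℝ) :
    𝓕 (fun x ↦ f (s * x)) ξ = |s⁻¹| • 𝓕 f (ξ / s) := by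
  simp only [Real.fourier_real_eq_integral_exp_smul]
  rw [← Measure.integral_comp_mul_left _ s]
  congr! 6 with x
  field_simp

lemma integral_norm_fourier_comp_mul_left (f : ℝ → E) {s : ℝ} (hs : s ≠ 0) :
    ∫ ξ, ‖𝓕 (fun x ↦ f (s * x)) ξ‖ = ∫ ξ, ‖𝓕 f ξ‖ := by
  simp only [fourier_comp_mul_left f hs, norm_smul, Real.norm_eq_abs, abs_abs]
  rw [integral_const_mul, Measure.integral_comp_div (fun ξ ↦ ‖𝓕 f ξ‖), smul_eq_mul, abs_inv,
    inv_mul_cancel_left₀ (abs_ne_zero.mpr hs)]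

lemma norm_fourier_le_of_integrable_deriv_deriv {f : ℝ → E} (hf : Integrable f)
    (hfd : Differentiable ℝ f) (hf' : Integrable (deriv f)) (hf'd : Differentiable ℝ (deriv f))
    (hf'' : Integrable (deriv (deriv f))) (ξ : ℝ) :
    ‖𝓕 f ξ‖ ≤ ((∫ x, ‖f x‖) + ∫ x, ‖deriv (deriv f) x‖) * (1 + ξ ^ 2)⁻¹ := by
  have norm_le (g : ℝ → E) : ‖𝓕 g ξ‖ ≤ ∫ x, ‖g x‖ :=
    VectorFourier.norm_fourierIntegral_le_integral_norm _ _ _ _ _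
  have norm_deriv_deriv : ‖𝓕 (deriv (deriv f)) ξ‖ = (2 * π) ^ 2 * (ξ ^ 2 * ‖𝓕 f ξ‖) := by
    simp only [Real.fourier_deriv hf' hf'd hf'', Real.fourier_deriv hf hfd hf', norm_smul,
      norm_mul, Complex.norm_I, Complex.norm_real, Complex.norm_ofNat, Real.norm_eq_abs,
      abs_of_pos pi_pos, ← sq_abs ξ]
    ring
  have one_le : 1 ≤ (2 * π) ^ 2 := one_le_pow₀ (by linarith [pi_gt_three])
  rw [← div_eq_mul_inv, le_div_iff₀ (by positivity)]
  calc ‖𝓕 f ξ‖ * (1 + ξ ^ 2) = ‖𝓕 f ξ‖ + ξ ^ 2 * ‖𝓕 f ξ‖ := by ring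
    _ ≤ ‖𝓕 f ξ‖ + ‖𝓕 (deriv (deriv f)) ξ‖ := by
      rw [norm_deriv_deriv]
      exact add_le_add le_rfl (le_mul_of_one_le_left (by positivity) one_le)
    _ ≤ _ := add_le_add (norm_le f) (norm_le _)

lemma integrable_fourier_of_integrable_deriv_deriv {f : ℝ → E} (hf : Integrable f)
    (hfd : Differentiable ℝ f) (hf' : Integrable (deriv f)) (hf'd : Differentiable ℝ (deriv f))
    (hf'' : Integrable (deriv (deriv f))) : Integrable (𝓕 f) := by
  have hcont : Continuous (𝓕 f) :=
    VectorFourier.fourierIntegral_continuous continuous_fourierChar (by fun_prop) hf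
  exact (integrable_inv_one_add_sq.const_mul _).mono' hcont.aestronglyMeasurable
    (.of_forall (norm_fourier_le_of_integrable_deriv_deriv hf hfd hf' hf'd hf''))

lemma integral_exp_mul_fourier_div_two_pi {f : ℝ → ℂ} (hcont : Continuous f) (hf : Integrable f)
    (hf' : Integrable (𝓕 f)) (τ : ℝ) :
    ∫ h : ℝ, Complex.exp (Complex.I * τ * h) * (((2 * π)⁻¹ : ℝ) * 𝓕 f (h / (2 * π))) = f τ := by
  have rescaled (h : ℝ) :
      Complex.exp (Complex.I * τ * h) * (((2 * π)⁻¹ : ℝ) * 𝓕 f (h / (2 * π))) =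
        ((2 * π)⁻¹ : ℝ) * (Complex.exp (2 * π * (h / (2 * π) * τ : ℝ) * Complex.I) *
          𝓕 f (h / (2 * π))) := by
    have hphase : Complex.I * τ * h = 2 * π * (h / (2 * π) * τ : ℝ) * Complex.I := by
      push_cast
      field_simp
    rw [hphase]
    ring
  simp only [rescaled]
  rw [integral_const_mul, Measure.integral_comp_div
    (fun ξ : ℝ ↦ Complex.exp (2 * π * (ξ * τ : ℝ) * Complex.I) * 𝓕 f ξ), abs_of_pos two_pi_pos,
    Complex.real_smul, Complex.ofReal_inv, inv_mul_cancel_left₀ (by exact_mod_cast two_pi_pos.ne')]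
  conv_rhs => rw [← hcont.fourierInv_fourier_eq hf hf', Real.fourierInv_eq']
  simp [mul_comm τ]

end Fourier

section PolynomialMulExp

lemma hasDerivAt_eval_mul_exp_eval (P Q : ℝ[X]) (x : ℝ) :
    HasDerivAt (fun x ↦ ((P.eval x * exp (Q.eval x) : ℝ) : ℂ))
      (((derivative P + P * derivative Q).eval x * exp (Q.eval x) : ℝ) : ℂ) x := by
  refine (((P.hasDerivAt x).mul (Q.hasDerivAt x).exp).congr_deriv ?_).ofReal_comp
  rw [eval_add, eval_mul]
  ring

-- The derivatives of `P * exp Q` are again of the form `R * exp Q` with `R` a polynomial.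
lemma integrable_fourier_eval_mul_exp_eval {Q : ℝ[X]}
    (hQ : ∀ P : ℝ[X], Integrable fun x ↦ P.eval x * exp (Q.eval x)) (P : ℝ[X]) :
    Integrable (𝓕 fun x ↦ ((P.eval x * exp (Q.eval x) : ℝ) : ℂ)) := by
  have differentiable (R : ℝ[X]) :
      Differentiable ℝ fun x ↦ ((R.eval x * exp (Q.eval x) : ℝ) : ℂ) :=
    fun x ↦ (hasDerivAt_eval_mul_exp_eval R Q x).differentiableAt
  have deriv_eq (R : ℝ[X]) := deriv_eq (hasDerivAt_eval_mul_exp_eval R Q)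
  refine integrable_fourier_of_integrable_deriv_deriv (hQ P).ofReal (differentiable P) ?_ ?_ ?_ <;>
    simp only [deriv_eq]
  exacts [(hQ _).ofReal, differentiable _, (hQ _).ofReal]

variable {n : ℕ} {w : ℝ}

lemma exp_neg_mul_pow_two_mul_le (hn : n ≠ 0) (hw : 0 ≤ w) (x : ℝ) :
    exp (-(w * x ^ (2 * n))) ≤ exp w * exp (-w * x ^ 2) := by
  have sq_le : x ^ 2 ≤ 1 + x ^ (2 * n) := by
    rw [pow_mul]
    rcases le_total 1 (x ^ 2) with h | h
    · linarith [le_self_pow₀ h hn]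
    · linarith [pow_nonneg (sq_nonneg x) n]
  rw [← exp_add, exp_le_exp]
  linarith [mul_le_mul_of_nonneg_left sq_le hw]

lemma integrable_pow_mul_exp_neg_mul_pow (hn : n ≠ 0) (hw : 0 < w) (k : ℕ) :
    Integrable fun x : ℝ ↦ x ^ k * exp (-(w * x ^ (2 * n))) := by
  have gaussian : Integrable fun x : ℝ ↦ x ^ k * exp (-w * x ^ 2) := by
    simpa only [rpow_natCast] using
      integrable_rpow_mul_exp_neg_mul_sq hw (neg_one_lt_zero.trans_le k.cast_nonneg)
  refine (gaussian.norm.const_mul (exp w)).mono' (by fun_prop) (.of_forall fun x ↦ ?_)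
  simp only [norm_mul, norm_of_nonneg (exp_nonneg _)]
  calc ‖x ^ k‖ * exp (-(w * x ^ (2 * n))) ≤ ‖x ^ k‖ * (exp w * exp (-w * x ^ 2)) := by
        gcongr
        exact exp_neg_mul_pow_two_mul_le hn hw.le x
    _ = exp w * (‖x ^ k‖ * exp (-w * x ^ 2)) := mul_left_comm _ _ _

lemma integrable_eval_mul_exp_neg_mul_pow (hn : n ≠ 0) (hw : 0 < w) (P : ℝ[X]) :
    Integrable fun x ↦ P.eval x * exp (-(w * x ^ (2 * n))) := by
  simp only [eval_eq_sum_range, Finset.sum_mul, mul_assoc]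
  exact integrable_finsetSum _ fun k _ ↦
    (integrable_pow_mul_exp_neg_mul_pow hn hw k).const_mul _

end PolynomialMulExp

/-- The Fourier symbol `ξ ↦ exp (-w ξ^{2n})` of the heat kernel `u2n n · w`, with complex values so
that Mathlib's Fourier transform applies to it. -/
noncomputable def heatSymbol (n : ℕ) (w ξ : ℝ) : ℂ := (exp (-(w * ξ ^ (2 * n))) : ℝ)

section HeatKernel

variable {n : ℕ} {w : ℝ}

lemma continuous_heatSymbol (n : ℕ) (w : ℝ) : Continuous (heatSymbol n w) := by
  unfold heatSymbol
  fun_prop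

lemma integrable_heatSymbol (hn : n ≠ 0) (hw : 0 < w) : Integrable (heatSymbol n w) := by
  have h := integrable_pow_mul_exp_neg_mul_pow hn hw 0
  simp only [pow_zero, one_mul] at h
  exact h.ofReal

lemma integrable_fourier_heatSymbol (hn : n ≠ 0) (hw : 0 < w) :
    Integrable (𝓕 (heatSymbol n w)) := by
  have h := integrable_fourier_eval_mul_exp_eval (Q := -(C w * X ^ (2 * n)))
    (by simpa using integrable_eval_mul_exp_neg_mul_pow hn hw) 1
  unfold heatSymbol
  simpa using h

lemma heatSymbol_pow_two_mul (n : ℕ) (s : ℝ) :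
    heatSymbol n (s ^ (2 * n)) = fun ξ ↦ heatSymbol n 1 (s * ξ) := by
  ext ξ
  rw [heatSymbol, heatSymbol, one_mul, mul_pow]

lemma integral_norm_fourier_heatSymbol (hn : n ≠ 0) (hw : 0 < w) :
    ∫ ξ, ‖𝓕 (heatSymbol n w) ξ‖ = ∫ ξ, ‖𝓕 (heatSymbol n 1) ξ‖ := by
  obtain ⟨s, hs, rfl⟩ : ∃ s : ℝ, 0 < s ∧ s ^ (2 * n) = w :=
    ⟨w ^ ((2 * n : ℕ) : ℝ)⁻¹, by positivity, rpow_inv_natCast_pow hw.le (by positivity)⟩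
  rw [heatSymbol_pow_two_mul, integral_norm_fourier_comp_mul_left _ hs.ne']

lemma u2n_eq_fourier_heatSymbol (n : ℕ) (x w : ℝ) :
    u2n n x w = ((2 * π)⁻¹ : ℝ) * 𝓕 (heatSymbol n w) (x / (2 * π)) := by
  rw [u2n, Real.fourier_real_eq_integral_exp_smul]
  congr! 3 with ξ
  -- The phase of `𝓕` is `e^{-2πi ξ x}`, whence the rescaling by `2π`.
  have hphase : -2 * π * ξ * (x / (2 * π)) = -(ξ * x) := by field_simp
  rw [heatSymbol, Complex.ofReal_exp, smul_eq_mul, ← Complex.exp_add, hphase]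
  push_cast
  ring_nf

lemma integrable_u2n (hn : n ≠ 0) (hw : 0 < w) : Integrable fun h ↦ u2n n h w := by
  simp only [u2n_eq_fourier_heatSymbol]
  exact ((integrable_fourier_heatSymbol hn hw).comp_div two_pi_pos.ne').const_mul _

lemma integral_norm_u2n (hn : n ≠ 0) (hw : 0 < w) :
    ∫ h, ‖u2n n h w‖ = ∫ ξ, ‖𝓕 (heatSymbol n 1) ξ‖ := by
  simp only [u2n_eq_fourier_heatSymbol, norm_mul, Complex.norm_real]
  rw [integral_const_mul, Measure.integral_comp_div (fun ξ ↦ ‖𝓕 (heatSymbol n w) ξ‖), norm_inv,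
    Real.norm_eq_abs, smul_eq_mul, inv_mul_cancel_left₀ (abs_ne_zero.mpr two_pi_pos.ne'),
    integral_norm_fourier_heatSymbol hn hw]

lemma integral_exp_mul_u2n (hn : n ≠ 0) (hw : 0 < w) (τ : ℝ) :
    ∫ h : ℝ, Complex.exp (Complex.I * τ * h) * u2n n h w = heatSymbol n w τ := by
  simp only [u2n_eq_fourier_heatSymbol]
  exact integral_exp_mul_fourier_div_two_pi (continuous_heatSymbol n w)
    (integrable_heatSymbol hn hw) (integrable_fourier_heatSymbol hn hw) τ

lemma stronglyMeasurable_u2n (n : ℕ) : StronglyMeasurable fun p : ℝ × ℝ ↦ u2n n p.1 p.2 := by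
  have hcont : Continuous fun q : (ℝ × ℝ) × ℝ ↦
      Complex.exp (-(Complex.I * q.2 * q.1.1) - ((q.1.2 * q.2 ^ (2 * n) : ℝ) : ℂ)) := by fun_prop
  exact hcont.stronglyMeasurable.integral_prod_right'.const_mul _

end HeatKernel

section Mixture

lemma integrable_prod_mul_of_integral_norm_le {α γ 𝕜 : Type*} [MeasurableSpace α]
    [MeasurableSpace γ] [RCLike 𝕜] {μ : Measure α} {ν : Measure γ} [SFinite μ] [SFinite ν]
    {ρ : γ → 𝕜} {k : α → γ → 𝕜} {M : ℝ} (hρ : Integrable ρ ν)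
    (hk : AEStronglyMeasurable (Function.uncurry k) (μ.prod ν))
    (hk_int : ∀ᵐ y ∂ν, Integrable (fun x ↦ k x y) μ)
    (hk_norm : ∀ᵐ y ∂ν, ∫ x, ‖k x y‖ ∂μ ≤ M) :
    Integrable (Function.uncurry fun x y ↦ ρ y * k x y) (μ.prod ν) := by
  have hmeas : AEStronglyMeasurable (Function.uncurry fun x y ↦ ρ y * k x y) (μ.prod ν) :=
    hρ.aestronglyMeasurable.comp_snd.mul hk
  refine (integrable_prod_iff' hmeas).2 ⟨hk_int.mono fun y hy ↦ hy.const_mul (ρ y), ?_⟩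
  refine (hρ.norm.mul_const M).mono' hmeas.norm.prod_swap.integral_prod_right'
    (hk_norm.mono fun y hy ↦ ?_)
  simp only [Function.uncurry_apply_pair, norm_mul, integral_const_mul, norm_norm]
  rw [norm_of_nonneg (integral_nonneg fun _ ↦ norm_nonneg _)]
  gcongr

lemma integrableOn_rpow_mul_exp_neg_mul {a r : ℝ} (ha : 0 < a) (hr : 0 < r) :
    IntegrableOn (fun w : ℝ ↦ w ^ (a - 1) * exp (-r * w)) (Ioi 0) := by
  simpa only [rpow_one] using
    integrableOn_rpow_mul_exp_neg_mul_rpow (s := a - 1) (by linarith) one_pos hr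

variable {n : ℕ} {a μ : ℝ}

lemma integrable_prod_gamma_mul_exp_mul_u2n (hn : n ≠ 0) (ha : 0 < a) (hμ : 0 < μ) (τ : ℝ) :
    Integrable (Function.uncurry fun h w : ℝ ↦ ((w ^ (a - 1) * exp (-μ * w) : ℝ) : ℂ) *
      (Complex.exp (Complex.I * τ * h) * u2n n h w)) (volume.prod (volume.restrict (Ioi 0))) := by
  have norm_phase (h : ℝ) : ‖Complex.exp (Complex.I * τ * h)‖ = 1 := by
    simp [Complex.norm_exp]
  have continuous_phase : Continuous fun h : ℝ ↦ Complex.exp (Complex.I * τ * h) := by fun_prop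
  refine integrable_prod_mul_of_integral_norm_le (M := ∫ ξ, ‖𝓕 (heatSymbol n 1) ξ‖)
    (integrableOn_rpow_mul_exp_neg_mul ha hμ).ofReal
    ((continuous_phase.comp continuous_fst).stronglyMeasurable.mul
      (stronglyMeasurable_u2n n)).aestronglyMeasurable ?_ ?_
  all_goals filter_upwards [ae_restrict_mem measurableSet_Ioi] with w hw
  · exact (integrable_u2n hn hw).bdd_mul (c := 1) continuous_phase.aestronglyMeasurable
      (.of_forall fun h ↦ (norm_phase h).le)
  · simp only [norm_mul, norm_phase, one_mul, integral_norm_u2n hn hw, le_refl]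

lemma integral_gamma_mul_heatSymbol (ha : 0 < a) (hμ : 0 < μ) (τ : ℝ) :
    ∫ w in Ioi (0 : ℝ), ((w ^ (a - 1) * exp (-μ * w) : ℝ) : ℂ) * heatSymbol n w τ =
      ((Gamma a / (μ + τ ^ (2 * n)) ^ a : ℝ) : ℂ) := by
  have hpos : 0 < μ + τ ^ (2 * n) := add_pos_of_pos_of_nonneg hμ ((even_two_mul n).pow_nonneg τ)
  have integrand (w : ℝ) : ((w ^ (a - 1) * exp (-μ * w) : ℝ) : ℂ) * heatSymbol n w τ =
      ((w ^ (a - 1) * exp (-((μ + τ ^ (2 * n)) * w)) : ℝ) : ℂ) := by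
    rw [heatSymbol, ← Complex.ofReal_mul, mul_assoc, ← exp_add]
    ring_nf
  simp only [integrand]
  rw [integral_complex_ofReal, integral_rpow_mul_exp_neg_mul_Ioi ha hpos, one_div,
    inv_rpow hpos.le, mul_comm, div_eq_mul_inv]

lemma integral_integral_gamma_mul_exp_mul_u2n (hn : n ≠ 0) (ha : 0 < a) (hμ : 0 < μ) (τ : ℝ) :
    ∫ h : ℝ, ∫ w in Ioi (0 : ℝ), ((w ^ (a - 1) * exp (-μ * w) : ℝ) : ℂ) *
        (Complex.exp (Complex.I * τ * h) * u2n n h w) =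
      ((Gamma a / (μ + τ ^ (2 * n)) ^ a : ℝ) : ℂ) := by
  rw [integral_integral_swap (integrable_prod_gamma_mul_exp_mul_u2n hn ha hμ τ),
    ← integral_gamma_mul_heatSymbol ha hμ]
  refine setIntegral_congr_fun measurableSet_Ioi fun w hw ↦ ?_
  rw [integral_const_mul, integral_exp_mul_u2n hn hw]

end Mixture

/-- The spectral function of the solution to
`(μ + (−1)^n d^{2n}/dt^{2n})^β X(t) = E(t)` is `σ²/(μ + τ^{2n})^{2β}`. -/
theorem stmt4 (n : ℕ) (hn : 1 ≤ n) (μ β σ : ℝ) (hμ : 0 < μ) (hβ : 0 < β) (hσ : 0 < σ)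
    (τ : ℝ) :
    Integrable (fun h : ℝ =>
      Complex.exp (Complex.I * τ * h) *
        (((σ ^ 2 / Real.Gamma (2 * β) : ℝ) : ℂ) *
          ∫ w in Set.Ioi (0 : ℝ),
            ((w ^ (2 * β - 1) * Real.exp (-μ * w) : ℝ) : ℂ) * u2n n h w)) ∧
    ∫ h : ℝ,
        Complex.exp (Complex.I * τ * h) *
          (((σ ^ 2 / Real.Gamma (2 * β) : ℝ) : ℂ) *
            ∫ w in Set.Ioi (0 : ℝ),
              ((w ^ (2 * β - 1) * Real.exp (-μ * w) : ℝ) : ℂ) * u2n n h w) =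
      ((σ ^ 2 / (μ + τ ^ (2 * n)) ^ (2 * β) : ℝ) : ℂ) := by
  have hn0 : n ≠ 0 := Nat.one_le_iff_ne_zero.mp hn
  have h2β : 0 < 2 * β := by positivity
  have move_phase (h : ℝ) :
      Complex.exp (Complex.I * τ * h) * (((σ ^ 2 / Gamma (2 * β) : ℝ) : ℂ) *
        ∫ w in Ioi (0 : ℝ), ((w ^ (2 * β - 1) * exp (-μ * w) : ℝ) : ℂ) * u2n n h w) =
      ((σ ^ 2 / Gamma (2 * β) : ℝ) : ℂ) *
        ∫ w in Ioi (0 : ℝ), ((w ^ (2 * β - 1) * exp (-μ * w) : ℝ) : ℂ) *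
          (Complex.exp (Complex.I * τ * h) * u2n n h w) := by
    simp only [mul_left_comm _ (Complex.exp _), integral_const_mul]
  simp only [move_phase]
  refine ⟨(integrable_prod_gamma_mul_exp_mul_u2n hn0 h2β hμ τ).integral_prod_left.const_mul _, ?_⟩
  rw [integral_const_mul, integral_integral_gamma_mul_exp_mul_u2n hn0 h2β hμ, ← Complex.ofReal_mul,
    div_mul_div_cancel₀ (Gamma_pos_of_pos h2β).ne']
end

section
/- For every α ∈ (0,1), s > 0 and ξ ≥ 0, the function z ↦ e^{−ξz} h_α(z,s) is integrable on ℝ and ∫_ℝ e^{−ξz} h_α(z,s) dz = e^{−s ξ^α}. -/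
open MeasureTheory Set Real

/-- The stable subordinator density
`h_α(z,s) = (1/(2π)) ∫_ℝ exp(−iτz − s|τ|^α e^{−iπα·sgn(τ)/2}) dτ`. -/
noncomputable def hstable (α s z : ℝ) : ℂ :=
  ((2 * Real.pi)⁻¹ : ℝ) *
    ∫ τ : ℝ, Complex.exp (-(Complex.I * τ * z) -
      ((s * |τ| ^ α : ℝ) : ℂ) *
        Complex.exp (-(Complex.I * ((Real.pi * α * Real.sign τ / 2 : ℝ) : ℂ))))

/-!
With `G(w) = exp(-s w^α)` on the right half-plane, the substitution `w = -iτ` turns `2π h_α(z, s)`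
into the Bromwich integral `∫ e^{wz} G(w) dτ` along the imaginary axis. By Cauchy's theorem the
line of integration may be moved to any `Re w = x ≥ 0`. Letting `x → ∞` shows that `h_α` vanishes
for `z < 0`; taking `x = 1 / z` and integrating by parts twice, the bound
`|G''(w)| ≤ C |w|^(α - 2)` gives `h_α(z, s) = O(z^(-1 - α))` for `z > 0`, so `h_α` is integrable.
On the line `Re w = Re ζ`, `z ↦ e^{-ζz} h_α(z, s)` is, up to scaling, the Fourier transform of
`τ ↦ G(ζ + iτ)`, and Fourier inversion at `τ = 0` yields the Laplace transform at `ζ`.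
-/

open Filter Topology FourierTransform
open Complex (I)

section BromwichIntegral

variable {E : Type*} [NormedAddCommGroup E] [NormedSpace ℂ E] {F : ℂ → E} {x : ℝ}

/-- The Bromwich integral of `F` along the vertical line `Re w = x`: the inverse Laplace transform
of `F` at `z`, without the customary factor `1 / (2π)`. -/
noncomputable def bromwichIntegral (F : ℂ → E) (x z : ℝ) : E :=
  ∫ τ : ℝ, Complex.exp ((x + τ * I) * z) • F (x + τ * I)

lemma norm_cexp_vertical_mul (x z τ : ℝ) :
    ‖Complex.exp ((x + τ * I) * z)‖ = Real.exp (x * z) := by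
  simp [Complex.norm_exp]

lemma integrable_bromwich_integrand (hF : Integrable fun τ : ℝ ↦ F (x + τ * I)) (z : ℝ) :
    Integrable fun τ : ℝ ↦ Complex.exp ((x + τ * I) * z) • F (x + τ * I) :=
  hF.bdd_smul (Real.exp (x * z)) (by fun_prop)
    (.of_forall fun τ ↦ (norm_cexp_vertical_mul x z τ).le)

lemma norm_bromwichIntegral_le_of_norm_le {g : ℝ → ℝ} (hg : Integrable g)
    (hFg : ∀ τ : ℝ, ‖F (x + τ * I)‖ ≤ g τ) (z : ℝ) :
    ‖bromwichIntegral F x z‖ ≤ Real.exp (x * z) * ∫ τ, g τ := by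
  rw [bromwichIntegral, ← integral_const_mul]
  refine norm_integral_le_of_norm_le (hg.const_mul _) (.of_forall fun τ ↦ ?_)
  rw [norm_smul, norm_cexp_vertical_mul]
  gcongr
  exact hFg τ

lemma hasDerivAt_ofReal_vertical (x τ : ℝ) : HasDerivAt (fun τ : ℝ ↦ (x + τ * I : ℂ)) I τ := by
  simpa using ((hasDerivAt_id τ).ofReal_comp.mul_const I).const_add (x : ℂ)

lemma bromwichIntegral_deriv (hd : ∀ τ : ℝ, DifferentiableAt ℂ F (x + τ * I))
    (hF : Integrable fun τ : ℝ ↦ F (x + τ * I))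
    (hF' : Integrable fun τ : ℝ ↦ deriv F (x + τ * I)) (z : ℝ) :
    bromwichIntegral (deriv F) x z = -(z : ℂ) • bromwichIntegral F x z := by
  have integrable_F := integrable_bromwich_integrand hF z
  have integrable_F' := integrable_bromwich_integrand hF' z
  have hasDerivAt_integrand (τ : ℝ) :
      HasDerivAt (fun τ : ℝ ↦ Complex.exp ((x + τ * I) * z) • F (x + τ * I))
        (I • (Complex.exp ((x + τ * I) * z) • deriv F (x + τ * I) +
          (z : ℂ) • Complex.exp ((x + τ * I) * z) • F (x + τ * I))) τ := by
    have hline := hasDerivAt_ofReal_vertical x τ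
    refine ((hline.mul_const (z : ℂ)).cexp.smul ((hd τ).hasDerivAt.scomp τ hline)).congr_deriv ?_
    simp only [Function.comp_apply]
    module
  have integral_deriv_eq_zero := integral_eq_zero_of_hasDerivAt_of_integrable hasDerivAt_integrand
    ((integrable_F'.add (integrable_F.fun_smul (z : ℂ))).fun_smul I) integrable_F
  rw [integral_smul, smul_eq_zero_iff_right Complex.I_ne_zero,
    integral_add integrable_F' (integrable_F.fun_smul (z : ℂ)), integral_smul]
    at integral_deriv_eq_zero
  rw [neg_smul]
  exact eq_neg_of_add_eq_zero_left integral_deriv_eq_zero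

lemma cexp_neg_mul_smul_bromwichIntegral (F : ℂ → E) (ζ : ℂ) (z : ℝ) :
    Complex.exp (-ζ * z) • bromwichIntegral F ζ.re z =
      𝓕 (fun τ : ℝ ↦ F (ζ + τ * I)) (z / -(2 * π)) := by
  rw [bromwichIntegral, ← integral_add_right_eq_self _ ζ.im, ← integral_smul, Real.fourier_eq']
  congr 1
  ext τ
  have hζ : (ζ.re + (τ + ζ.im : ℝ) * I : ℂ) = ζ + τ * I := by
    conv_rhs => rw [← Complex.re_add_im ζ]
    push_cast
    ring
  rw [hζ, smul_smul, ← Complex.exp_add]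
  congr 2
  have hpi : (π : ℂ) ≠ 0 := Complex.ofReal_ne_zero.2 Real.pi_ne_zero
  simp only [RCLike.inner_apply, conj_trivial]
  push_cast
  field_simp
  ring

lemma continuous_bromwichIntegral_zero (hF : Integrable fun τ : ℝ ↦ F (τ * I)) :
    Continuous (bromwichIntegral F 0) := by
  have h𝓕 : Continuous (𝓕 fun τ : ℝ ↦ F (τ * I)) :=
    VectorFourier.fourierIntegral_continuous Real.continuous_fourierChar continuous_inner hF
  have heq (z : ℝ) : bromwichIntegral F 0 z = 𝓕 (fun τ : ℝ ↦ F (τ * I)) (z / -(2 * π)) := by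
    simpa using cexp_neg_mul_smul_bromwichIntegral F 0 z
  rw [funext heq]
  fun_prop

lemma norm_vertical_rpow (hx : 0 < x) (p τ : ℝ) :
    ‖(x + τ * I : ℂ)‖ ^ p = x ^ p * ‖1 + (τ / x : ℝ) * I‖ ^ p := by
  rw [← Real.mul_rpow hx.le (norm_nonneg _)]
  congr 1
  nth_rw 2 [← Real.norm_of_nonneg hx.le]
  rw [← Complex.norm_real, ← norm_mul]
  congr 1
  have : (x : ℂ) ≠ 0 := Complex.ofReal_ne_zero.2 hx.ne'
  push_cast
  field_simp

lemma integrable_norm_one_add_mul_I_rpow_neg {p : ℝ} (hp : 1 < p) :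
    Integrable fun τ : ℝ ↦ ‖(1 + τ * I : ℂ)‖ ^ (-p) := by
  refine (integrable_rpow_neg_one_add_norm_sq (E := ℝ) (r := p) (by simpa)).congr
    (.of_forall fun τ ↦ ?_)
  have hnorm : ‖(1 + τ * I : ℂ)‖ = √(1 + ‖τ‖ ^ 2) := by
    simpa using Complex.norm_add_mul_I 1 τ
  simp only [hnorm]
  rw [Real.sqrt_eq_rpow, ← Real.rpow_mul (by positivity)]
  ring_nf

lemma integrable_norm_vertical_rpow_neg {p : ℝ} (hp : 1 < p) (hx : 0 < x) :
    Integrable fun τ : ℝ ↦ ‖(x + τ * I : ℂ)‖ ^ (-p) := by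
  simp_rw [norm_vertical_rpow hx]
  exact ((integrable_norm_one_add_mul_I_rpow_neg hp).comp_div hx.ne').const_mul _

lemma integral_norm_vertical_rpow_neg (p : ℝ) (hx : 0 < x) :
    ∫ τ : ℝ, ‖(x + τ * I : ℂ)‖ ^ (-p) = x ^ (1 - p) * ∫ τ : ℝ, ‖(1 + τ * I : ℂ)‖ ^ (-p) := by
  simp_rw [norm_vertical_rpow hx]
  rw [integral_const_mul, Measure.integral_comp_div (fun u : ℝ ↦ ‖(1 + u * I : ℂ)‖ ^ (-p)) x,
    abs_of_pos hx, smul_eq_mul, ← mul_assoc, ← Real.rpow_add_one hx.ne', neg_add_eq_sub]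

end BromwichIntegral

/-- `F` is holomorphic on the open right half-plane, continuous up to the imaginary axis, and
dominated on every vertical line by one and the same integrable function `φ` of `Im w`, which tends
to zero at infinity. These are the conditions under which the contour of a Bromwich integral of `F`
can be moved across the half-plane. -/
structure VerticallyDominated {E : Type*} [NormedAddCommGroup E] [NormedSpace ℂ E]
    (F : ℂ → E) (φ : ℝ → ℝ) : Prop where
  diffContOnCl : DiffContOnCl ℂ F {w | 0 < w.re}
  norm_le : ∀ w : ℂ, 0 ≤ w.re → ‖F w‖ ≤ φ w.im
  integrable : Integrable φ
  tendsto_zero : Tendsto φ (cocompact ℝ) (𝓝 0)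

namespace VerticallyDominated

variable {E : Type*} [NormedAddCommGroup E] [NormedSpace ℂ E] {F : ℂ → E} {φ : ℝ → ℝ} {x : ℝ}

lemma continuousOn (hF : VerticallyDominated F φ) : ContinuousOn F {w | 0 ≤ w.re} := by
  simpa using hF.diffContOnCl.continuousOn

lemma continuous_vertical (hF : VerticallyDominated F φ) {ζ : ℂ} (hζ : 0 ≤ ζ.re) :
    Continuous fun τ : ℝ ↦ F (ζ + τ * I) :=
  hF.continuousOn.comp_continuous (by fun_prop) fun τ ↦ by simpa using hζ

lemma integrable_vertical (hF : VerticallyDominated F φ) {ζ : ℂ} (hζ : 0 ≤ ζ.re) :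
    Integrable fun τ : ℝ ↦ F (ζ + τ * I) :=
  (hF.integrable.comp_add_left ζ.im).mono' (hF.continuous_vertical hζ).aestronglyMeasurable
    (.of_forall fun τ ↦ by simpa using hF.norm_le (ζ + τ * I) (by simpa using hζ))

lemma norm_bromwichIntegral_le (hF : VerticallyDominated F φ) (hx : 0 ≤ x) (z : ℝ) :
    ‖bromwichIntegral F x z‖ ≤ Real.exp (x * z) * ∫ τ, φ τ :=
  norm_bromwichIntegral_le_of_norm_le hF.integrable
    (fun τ ↦ by simpa using hF.norm_le (x + τ * I) (by simpa using hx)) z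

lemma tendsto_integral_horizontal_cocompact (hF : VerticallyDominated F φ) (hx : 0 ≤ x) (z : ℝ) :
    Tendsto (fun τ : ℝ ↦ ∫ t in 0..x, Complex.exp ((t + τ * I) * z) • F (t + τ * I))
      (cocompact ℝ) (𝓝 0) := by
  have hbound : Tendsto (fun τ ↦ Real.exp (x * |z|) * φ τ * |x - 0|) (cocompact ℝ) (𝓝 0) := by
    simpa using (hF.tendsto_zero.const_mul (Real.exp (x * |z|))).mul_const |x - 0|
  refine squeeze_zero_norm (fun τ ↦ ?_) hbound
  refine intervalIntegral.norm_integral_le_of_norm_le_const fun t ht ↦ ?_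
  rw [uIoc_of_le hx] at ht
  have hFφ : ‖F (t + τ * I)‖ ≤ φ τ := by
    simpa using hF.norm_le (t + τ * I) (by simpa using ht.1.le)
  have htz : t * z ≤ x * |z| := calc
    t * z ≤ t * |z| := mul_le_mul_of_nonneg_left (le_abs_self z) ht.1.le
    _ ≤ x * |z| := mul_le_mul_of_nonneg_right ht.2 (abs_nonneg z)
  rw [norm_smul, norm_cexp_vertical_mul]
  gcongr

lemma integral_boundary_rect_eq_zero (hF : VerticallyDominated F φ) (hx : 0 ≤ x) (z T : ℝ) :
    (∫ t in 0..x, Complex.exp ((t + (-T : ℝ) * I) * z) • F (t + (-T : ℝ) * I)) -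
      (∫ t in 0..x, Complex.exp ((t + T * I) * z) • F (t + T * I)) +
      I • (∫ τ in -T..T, Complex.exp ((x + τ * I) * z) • F (x + τ * I)) -
      I • (∫ τ in -T..T, Complex.exp (((0 : ℝ) + τ * I) * z) • F ((0 : ℝ) + τ * I)) = 0 := by
  refine Complex.integral_boundary_rect_eq_zero_of_continuousOn_of_differentiableOn
    (fun w ↦ Complex.exp (w * z) • F w) ⟨0, -T⟩ ⟨x, T⟩ ?_ ?_
  · refine ContinuousOn.smul (by fun_prop) (hF.continuousOn.mono fun w hw ↦ ?_)
    have hre := (Complex.mem_reProdIm.1 hw).1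
    rw [uIcc_of_le hx] at hre
    exact hre.1
  · refine DifferentiableOn.smul (by fun_prop)
      (hF.diffContOnCl.differentiableOn.mono fun w hw ↦ ?_)
    have hre := (Complex.mem_reProdIm.1 hw).1
    rw [min_eq_left hx] at hre
    exact hre.1

lemma bromwichIntegral_eq_imaginaryAxis (hF : VerticallyDominated F φ) (hx : 0 ≤ x) (z : ℝ) :
    bromwichIntegral F x z = bromwichIntegral F 0 z := by
  have tendsto_bottom := (hF.tendsto_integral_horizontal_cocompact hx z).comp
    (tendsto_neg_atTop_atBot.mono_right atBot_le_cocompact)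
  have tendsto_top := (hF.tendsto_integral_horizontal_cocompact hx z).mono_left atTop_le_cocompact
  have tendsto_vertical {y : ℝ} (hy : 0 ≤ y) := intervalIntegral_tendsto_integral
    (integrable_bromwich_integrand (hF.integrable_vertical (ζ := y) (by simpa using hy)) z)
    tendsto_neg_atTop_atBot tendsto_id
  have tendsto_boundary := ((tendsto_bottom.sub tendsto_top).add
    ((tendsto_vertical hx).const_smul I)).sub ((tendsto_vertical le_rfl).const_smul I)
  have hlim := tendsto_nhds_unique
    (tendsto_boundary.congr fun T ↦ hF.integral_boundary_rect_eq_zero hx z T) tendsto_const_nhds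
  rw [sub_zero, zero_add, ← smul_sub, smul_eq_zero_iff_right Complex.I_ne_zero] at hlim
  exact sub_eq_zero.1 hlim

lemma bromwichIntegral_of_neg (hF : VerticallyDominated F φ) {z : ℝ} (hz : z < 0) :
    bromwichIntegral F 0 z = 0 := by
  have hbound : Tendsto (fun x ↦ Real.exp (x * z) * ∫ τ, φ τ) atTop (𝓝 0) := by
    simpa using (Real.tendsto_exp_atBot.comp
      (tendsto_id.atTop_mul_const_of_neg hz)).mul_const (∫ τ, φ τ)
  rw [← norm_le_zero_iff]
  -- Let the line `Re w = x` escape to infinity.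
  refine ge_of_tendsto hbound ?_
  filter_upwards [eventually_ge_atTop 0] with x hx
  rw [← hF.bromwichIntegral_eq_imaginaryAxis hx z]
  exact hF.norm_bromwichIntegral_le hx z

variable [CompleteSpace E]

theorem integral_cexp_neg_mul_smul_bromwichIntegral (hF : VerticallyDominated F φ) {ζ : ℂ}
    (hζ : 0 ≤ ζ.re)
    (hint : Integrable fun z : ℝ ↦ Complex.exp (-ζ * z) • bromwichIntegral F 0 z) :
    ∫ z : ℝ, Complex.exp (-ζ * z) • bromwichIntegral F 0 z = (2 * π) • F ζ := by
  set f : ℝ → E := fun τ ↦ F (ζ + τ * I) with hf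
  have hfourier (z : ℝ) :
      Complex.exp (-ζ * z) • bromwichIntegral F 0 z = 𝓕 f (z / -(2 * π)) := by
    rw [← hF.bromwichIntegral_eq_imaginaryAxis hζ, cexp_neg_mul_smul_bromwichIntegral]
  have integrable_fourier : Integrable (𝓕 f) := by
    rw [funext hfourier] at hint
    exact (integrable_comp_div_iff _ (by simp [Real.pi_ne_zero])).1 hint
  have integral_fourier : ∫ v, 𝓕 f v = F ζ := by
    have hinv := (hF.integrable_vertical hζ).fourierInv_fourier_eq integrable_fourier
      (hF.continuous_vertical hζ).continuousAt (v := 0)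
    simpa [Real.fourierInv_eq', hf] using hinv
  rw [funext hfourier, Measure.integral_comp_div (𝓕 f), integral_fourier, abs_neg,
    abs_of_pos Real.two_pi_pos]

section Decay

variable {C p : ℝ}

lemma sq_mul_norm_bromwichIntegral_le (hF : VerticallyDominated F φ) (hp : 1 < p) (hx : 0 < x)
    (hF' : Integrable fun τ : ℝ ↦ deriv F (x + τ * I))
    (hF'' : ∀ w : ℂ, 0 < w.re → ‖deriv (deriv F) w‖ ≤ C * ‖w‖ ^ (-p)) (z : ℝ) :
    z ^ 2 * ‖bromwichIntegral F x z‖ ≤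
      Real.exp (x * z) * (C * (x ^ (1 - p) * ∫ τ : ℝ, ‖(1 + τ * I : ℂ)‖ ^ (-p))) := by
  have hopen : IsOpen {w : ℂ | 0 < w.re} := isOpen_lt continuous_const Complex.continuous_re
  have hmem (τ : ℝ) : (x + τ * I : ℂ) ∈ {w : ℂ | 0 < w.re} := by simpa using hx
  have differentiableOn_F := hF.diffContOnCl.differentiableOn
  have differentiableOn_F' := differentiableOn_F.deriv hopen
  have hbound (τ : ℝ) := hF'' (x + τ * I) (hmem τ)
  have integrable_bound := (integrable_norm_vertical_rpow_neg hp hx).const_mul C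
  have integrable_F'' : Integrable fun τ : ℝ ↦ deriv (deriv F) (x + τ * I) :=
    integrable_bound.mono' ((differentiableOn_F'.deriv hopen).continuousOn.comp_continuous
      (by fun_prop) hmem).aestronglyMeasurable (.of_forall hbound)
  have bromwichIntegral_F'' :
      bromwichIntegral (deriv (deriv F)) x z = (z ^ 2 : ℂ) • bromwichIntegral F x z := by
    rw [bromwichIntegral_deriv (fun τ ↦ differentiableOn_F'.differentiableAt
        (hopen.mem_nhds (hmem τ))) hF' integrable_F'',
      bromwichIntegral_deriv (fun τ ↦ differentiableOn_F.differentiableAt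
        (hopen.mem_nhds (hmem τ))) (hF.integrable_vertical (by simpa using hx.le)) hF']
    module
  calc z ^ 2 * ‖bromwichIntegral F x z‖
      = ‖bromwichIntegral (deriv (deriv F)) x z‖ := by simp [bromwichIntegral_F'', norm_smul]
    _ ≤ Real.exp (x * z) * ∫ τ : ℝ, C * ‖(x + τ * I : ℂ)‖ ^ (-p) :=
      norm_bromwichIntegral_le_of_norm_le integrable_bound hbound z
    _ = _ := by rw [integral_const_mul, integral_norm_vertical_rpow_neg p hx]

lemma norm_bromwichIntegral_le_rpow (hF : VerticallyDominated F φ) (hp : 1 < p)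
    (hF' : ∀ x : ℝ, 0 < x → Integrable fun τ : ℝ ↦ deriv F (x + τ * I))
    (hF'' : ∀ w : ℂ, 0 < w.re → ‖deriv (deriv F) w‖ ≤ C * ‖w‖ ^ (-p)) {z : ℝ} (hz : 0 < z) :
    ‖bromwichIntegral F 0 z‖ ≤
      Real.exp 1 * C * (∫ τ : ℝ, ‖(1 + τ * I : ℂ)‖ ^ (-p)) * z ^ (p - 3) := by
  -- The line `Re w = 1 / z` balances the growth of `e^{wz}` against the singularity of `F''` at 0.
  have hx : 0 < z⁻¹ := inv_pos.2 hz
  have hpow : z⁻¹ ^ (1 - p) = z ^ 2 * z ^ (p - 3) := by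
    rw [Real.inv_rpow hz.le, ← Real.rpow_neg hz.le, ← Real.rpow_natCast, ← Real.rpow_add hz]
    congr 1
    push_cast
    ring
  have hsq := hF.sq_mul_norm_bromwichIntegral_le hp hx (hF' _ hx) hF'' z
  rw [inv_mul_cancel₀ hz.ne', hpow, hF.bromwichIntegral_eq_imaginaryAxis hx.le] at hsq
  refine le_of_mul_le_mul_left (hsq.trans_eq ?_) (sq_pos_of_pos hz)
  ring

lemma integrable_bromwichIntegral (hF : VerticallyDominated F φ) (hp : p ∈ Ioo 1 2)
    (hF' : ∀ x : ℝ, 0 < x → Integrable fun τ : ℝ ↦ deriv F (x + τ * I))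
    (hF'' : ∀ w : ℂ, 0 < w.re → ‖deriv (deriv F) w‖ ≤ C * ‖w‖ ^ (-p)) :
    Integrable (bromwichIntegral F 0) := by
  have hcont : Continuous (bromwichIntegral F 0) :=
    continuous_bromwichIntegral_zero (by simpa using hF.integrable_vertical (ζ := 0) le_rfl)
  have integrableOn_neg : IntegrableOn (bromwichIntegral F 0) (Iio 0) :=
    integrableOn_zero.congr_fun (fun z hz ↦ (hF.bromwichIntegral_of_neg hz).symm) measurableSet_Iio
  have integrableOn_large : IntegrableOn (bromwichIntegral F 0) (Ioi 1) := by
    refine ((integrableOn_Ioi_rpow_of_lt (by linarith [hp.2] : p - 3 < -1) one_pos).const_mul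
      (Real.exp 1 * C * ∫ τ : ℝ, ‖(1 + τ * I : ℂ)‖ ^ (-p))).mono' hcont.aestronglyMeasurable ?_
    filter_upwards [ae_restrict_mem measurableSet_Ioi] with z hz
    exact hF.norm_bromwichIntegral_le_rpow hp.1 hF' hF'' (one_pos.trans hz)
  rw [← integrableOn_univ, ← Iio_union_Ici (a := (0 : ℝ)), ← Icc_union_Ioi_eq_Ici zero_le_one]
  exact integrableOn_neg.union (hcont.integrableOn_Icc.union integrableOn_large)

theorem integrable_cexp_neg_mul_smul_bromwichIntegral (hF : VerticallyDominated F φ)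
    (hp : p ∈ Ioo 1 2) (hF' : ∀ x : ℝ, 0 < x → Integrable fun τ : ℝ ↦ deriv F (x + τ * I))
    (hF'' : ∀ w : ℂ, 0 < w.re → ‖deriv (deriv F) w‖ ≤ C * ‖w‖ ^ (-p)) {ζ : ℂ} (hζ : 0 ≤ ζ.re) :
    Integrable fun z : ℝ ↦ Complex.exp (-ζ * z) • bromwichIntegral F 0 z := by
  have hint := hF.integrable_bromwichIntegral hp hF' hF''
  have hexp : Continuous fun z : ℝ ↦ Complex.exp (-ζ * z) := by fun_prop
  refine hint.mono (hexp.aestronglyMeasurable.smul hint.aestronglyMeasurable)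
    (.of_forall fun z ↦ ?_)
  rcases lt_or_ge z 0 with hz | hz
  · simp [hF.bromwichIntegral_of_neg hz]
  · rw [norm_smul]
    refine mul_le_of_le_one_left (norm_nonneg _) ?_
    simpa [Complex.norm_exp] using mul_nonneg hζ hz

end Decay

end VerticallyDominated

section StableSymbol

/-- The Laplace transform `w ↦ exp(-s w^α)` of the stable subordinator at time `s`, with the
principal branch of the power. -/
noncomputable def stableSymbol (α s : ℝ) (w : ℂ) : ℂ :=
  Complex.exp (-s * w ^ (α : ℂ))

variable {α s : ℝ} {w : ℂ}

lemma arg_ofReal_mul_I (τ : ℝ) : (τ * I : ℂ).arg = π * Real.sign τ / 2 := by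
  rcases lt_trichotomy τ 0 with hτ | rfl | hτ
  · have hneg : (τ * I : ℂ) = (-τ : ℝ) * -I := by
      push_cast
      ring
    rw [hneg, Complex.arg_real_mul _ (neg_pos.2 hτ), Complex.arg_neg_I, Real.sign_of_neg hτ]
    ring
  · simp
  · rw [Complex.arg_real_mul _ hτ, Complex.arg_I, Real.sign_of_pos hτ, mul_one]

lemma ofReal_mul_I_cpow (α τ : ℝ) :
    (τ * I : ℂ) ^ (α : ℂ) =
      (|τ| ^ α : ℝ) * Complex.exp (I * (π * α * Real.sign τ / 2 : ℝ)) := by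
  have harg : I * (π * α * Real.sign τ / 2 : ℝ) = (π * Real.sign τ / 2 * α : ℝ) * I := by
    push_cast
    ring
  rw [Complex.cpow_ofReal, arg_ofReal_mul_I, harg, Complex.exp_mul_I, ← Complex.ofReal_cos,
    ← Complex.ofReal_sin, norm_mul, Complex.norm_I, mul_one, Complex.norm_real, Real.norm_eq_abs]

lemma hstable_eq_bromwichIntegral (α s z : ℝ) :
    hstable α s z = ((2 * π)⁻¹ : ℝ) * bromwichIntegral (stableSymbol α s) 0 z := by
  rw [hstable, bromwichIntegral, ← integral_neg_eq_self]
  congr 2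
  ext τ
  simp only [Complex.ofReal_zero, zero_add, stableSymbol, smul_eq_mul, ofReal_mul_I_cpow, abs_neg,
    Real.sign_neg]
  rw [← Complex.exp_add]
  push_cast
  ring_nf

lemma cos_pi_mul_div_two_pos (hα : α ∈ Ioo (0 : ℝ) 1) : 0 < Real.cos (π * α / 2) :=
  Real.cos_pos_of_mem_Ioo ⟨by nlinarith [Real.pi_pos, hα.1], by nlinarith [Real.pi_pos, hα.2]⟩

lemma cos_mul_norm_rpow_le_re_cpow (hα : α ∈ Icc (0 : ℝ) 2) (hw : 0 ≤ w.re) :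
    Real.cos (π * α / 2) * ‖w‖ ^ α ≤ (w ^ (α : ℂ)).re := by
  have harg : |w.arg * α| ≤ π * α / 2 := by
    rw [abs_mul, abs_of_nonneg hα.1]
    calc |w.arg| * α ≤ π / 2 * α :=
          mul_le_mul_of_nonneg_right (Complex.abs_arg_le_pi_div_two_iff.2 hw) hα.1
      _ = π * α / 2 := by ring
  have hcos : Real.cos (π * α / 2) ≤ Real.cos (w.arg * α) := by
    rw [← Real.cos_abs (w.arg * α)]
    exact Real.cos_le_cos_of_nonneg_of_le_pi (abs_nonneg _) (by nlinarith [Real.pi_pos, hα.2]) harg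
  rw [Complex.cpow_ofReal_re, mul_comm]
  gcongr

lemma norm_stableSymbol_le (hα : α ∈ Icc (0 : ℝ) 2) (hs : 0 ≤ s) (hw : 0 ≤ w.re) :
    ‖stableSymbol α s w‖ ≤ Real.exp (-(s * Real.cos (π * α / 2)) * ‖w‖ ^ α) := by
  rw [stableSymbol, Complex.norm_exp, Real.exp_le_exp, ← Complex.ofReal_neg, Complex.re_ofReal_mul,
    neg_mul, neg_mul, neg_le_neg_iff, mul_assoc]
  exact mul_le_mul_of_nonneg_left (cos_mul_norm_rpow_le_re_cpow hα hw) hs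

lemma norm_stableSymbol_le_abs_im (hα : α ∈ Ioo (0 : ℝ) 1) (hs : 0 ≤ s) (hw : 0 ≤ w.re) :
    ‖stableSymbol α s w‖ ≤ Real.exp (-(s * Real.cos (π * α / 2)) * |w.im| ^ α) := by
  refine (norm_stableSymbol_le ⟨hα.1.le, by linarith [hα.2]⟩ hs hw).trans (Real.exp_le_exp.2 ?_)
  exact mul_le_mul_of_nonpos_left
    (Real.rpow_le_rpow (abs_nonneg _) (Complex.abs_im_le_norm w) hα.1.le)
    (neg_nonpos.2 (mul_nonneg hs (cos_pi_mul_div_two_pos hα).le))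

lemma integrable_exp_neg_mul_abs_rpow {b : ℝ} (hα : 0 < α) (hb : 0 < b) :
    Integrable fun τ : ℝ ↦ Real.exp (-b * |τ| ^ α) := by
  refine (integrable_fun_norm_addHaar volume (E := ℝ) (f := fun r ↦ Real.exp (-b * r ^ α))).2 ?_
  simpa using integrableOn_rpow_mul_exp_neg_mul_rpow (s := 0) (by norm_num) hα hb

lemma tendsto_exp_neg_mul_abs_rpow_cocompact {b : ℝ} (hα : 0 < α) (hb : 0 < b) :
    Tendsto (fun τ : ℝ ↦ Real.exp (-b * |τ| ^ α)) (cocompact ℝ) (𝓝 0) :=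
  Real.tendsto_exp_atBot.comp <| ((tendsto_rpow_atTop hα).comp
    tendsto_norm_cocompact_atTop).const_mul_atTop_of_neg (neg_neg_of_pos hb)

lemma continuousAt_stableSymbol (hα : 0 < α) (s : ℝ) (hw : 0 ≤ w.re) :
    ContinuousAt (stableSymbol α s) w := by
  have hcpow : ContinuousAt (fun w : ℂ ↦ w ^ (α : ℂ)) w :=
    Complex.continuousAt_cpow_const_of_re_pos (.inl hw) (by simpa using hα)
  unfold stableSymbol
  fun_prop

lemma hasDerivAt_stableSymbol (α s : ℝ) (hw : 0 < w.re) :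
    HasDerivAt (stableSymbol α s)
      (-(s * α) * w ^ ((α - 1 : ℝ) : ℂ) * stableSymbol α s w) w := by
  have hcpow : HasDerivAt (fun w : ℂ ↦ w ^ (α : ℂ)) (α * w ^ ((α : ℂ) - 1)) w := by
    simpa using (hasDerivAt_id w).cpow_const (c := (α : ℂ)) (.inl hw)
  refine (hcpow.const_mul (-(s : ℂ))).cexp.congr_deriv ?_
  rw [stableSymbol]
  push_cast
  ring

lemma verticallyDominated_stableSymbol (hα : α ∈ Ioo (0 : ℝ) 1) (hs : 0 < s) :
    VerticallyDominated (stableSymbol α s)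
      fun τ ↦ Real.exp (-(s * Real.cos (π * α / 2)) * |τ| ^ α) where
  diffContOnCl :=
    { differentiableOn := fun _ hw ↦
        (hasDerivAt_stableSymbol α s hw).differentiableAt.differentiableWithinAt
      continuousOn := fun w hw ↦
        (continuousAt_stableSymbol hα.1 s (by simpa using hw)).continuousWithinAt }
  norm_le _ hw := norm_stableSymbol_le_abs_im hα hs.le hw
  integrable := integrable_exp_neg_mul_abs_rpow hα.1 (mul_pos hs (cos_pi_mul_div_two_pos hα))
  tendsto_zero :=
    tendsto_exp_neg_mul_abs_rpow_cocompact hα.1 (mul_pos hs (cos_pi_mul_div_two_pos hα))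

lemma deriv_deriv_stableSymbol (α s : ℝ) (hw : 0 < w.re) :
    deriv (deriv (stableSymbol α s)) w =
      s * α * (1 - α) * w ^ ((α - 2 : ℝ) : ℂ) * stableSymbol α s w +
        (s * α * w ^ ((α - 1 : ℝ) : ℂ)) ^ 2 * stableSymbol α s w := by
  have hderiv : deriv (stableSymbol α s) =ᶠ[𝓝 w]
      fun w ↦ -(s * α) * w ^ ((α - 1 : ℝ) : ℂ) * stableSymbol α s w := by
    filter_upwards [(isOpen_lt continuous_const Complex.continuous_re).mem_nhds hw] with v hv
    exact (hasDerivAt_stableSymbol α s hv).deriv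
  have hcpow : HasDerivAt (fun w : ℂ ↦ w ^ ((α - 1 : ℝ) : ℂ))
      ((α - 1 : ℝ) * w ^ (((α - 1 : ℝ) : ℂ) - 1)) w := by
    simpa using (hasDerivAt_id w).cpow_const (c := ((α - 1 : ℝ) : ℂ)) (.inl hw)
  have hexponent : (((α - 1 : ℝ) : ℂ) - 1) = ((α - 2 : ℝ) : ℂ) := by
    push_cast
    ring
  rw [hderiv.deriv_eq,
    ((hcpow.const_mul (-(s * α : ℂ))).fun_mul (hasDerivAt_stableSymbol α s hw)).deriv, hexponent]
  push_cast
  ring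

lemma norm_stableSymbol_le_one (hα : α ∈ Ioo (0 : ℝ) 1) (hs : 0 ≤ s) (hw : 0 ≤ w.re) :
    ‖stableSymbol α s w‖ ≤ 1 := by
  refine (norm_stableSymbol_le_abs_im hα hs hw).trans (Real.exp_le_one_iff.2 ?_)
  have := cos_pi_mul_div_two_pos hα
  rw [neg_mul]
  exact neg_nonpos.2 (by positivity)

lemma norm_rpow_mul_norm_stableSymbol_le (hα : α ∈ Ioo (0 : ℝ) 1) (hs : 0 < s) (hw : 0 ≤ w.re) :
    ‖w‖ ^ α * ‖stableSymbol α s w‖ ≤ (s * Real.cos (π * α / 2))⁻¹ := by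
  set b := s * Real.cos (π * α / 2)
  have b_pos : 0 < b := mul_pos hs (cos_pi_mul_div_two_pos hα)
  rw [← one_div, le_div_iff₀' b_pos]
  calc b * (‖w‖ ^ α * ‖stableSymbol α s w‖)
      ≤ b * (‖w‖ ^ α * Real.exp (-b * ‖w‖ ^ α)) := by
        gcongr
        exact norm_stableSymbol_le ⟨hα.1.le, by linarith [hα.2]⟩ hs.le hw
    _ = b * ‖w‖ ^ α * Real.exp (-(b * ‖w‖ ^ α)) := by ring_nf
    _ ≤ Real.exp (-1) := Real.mul_exp_neg_le_exp_neg_one _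
    _ ≤ 1 := Real.exp_le_one_iff.2 (by norm_num)

lemma norm_deriv_deriv_stableSymbol_le (hα : α ∈ Ioo (0 : ℝ) 1) (hs : 0 < s) (hw : 0 < w.re) :
    ‖deriv (deriv (stableSymbol α s)) w‖ ≤
      (s * α * (1 - α) + (s * α) ^ 2 * (s * Real.cos (π * α / 2))⁻¹) * ‖w‖ ^ (-(2 - α)) := by
  have norm_w_pos : 0 < ‖w‖ := norm_pos_iff.2 fun h ↦ by simp [h] at hw
  have α_nonneg := hα.1.le
  have one_sub_α_nonneg := sub_nonneg.2 hα.2.le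
  have hpow : (‖w‖ ^ (α - 1)) ^ 2 = ‖w‖ ^ (α - 2) * ‖w‖ ^ α := by
    rw [← Real.rpow_mul_natCast norm_w_pos.le, ← Real.rpow_add norm_w_pos]
    congr 1
    push_cast
    ring
  have norm_one_sub_α : ‖(1 - α : ℂ)‖ = 1 - α := by
    rw [← Complex.ofReal_one, ← Complex.ofReal_sub, Complex.norm_of_nonneg one_sub_α_nonneg]
  rw [deriv_deriv_stableSymbol α s hw, neg_sub]
  refine (norm_add_le _ _).trans ?_
  simp only [norm_mul, norm_pow, Complex.norm_cpow_real, Complex.norm_of_nonneg hs.le,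
    Complex.norm_of_nonneg α_nonneg, norm_one_sub_α]
  calc s * α * (1 - α) * ‖w‖ ^ (α - 2) * ‖stableSymbol α s w‖ +
        (s * α * ‖w‖ ^ (α - 1)) ^ 2 * ‖stableSymbol α s w‖
      = s * α * (1 - α) * ‖w‖ ^ (α - 2) * ‖stableSymbol α s w‖ +
        (s * α) ^ 2 * ‖w‖ ^ (α - 2) * (‖w‖ ^ α * ‖stableSymbol α s w‖) := by
        rw [mul_pow, hpow]
        ring
    _ ≤ s * α * (1 - α) * ‖w‖ ^ (α - 2) * 1 +
        (s * α) ^ 2 * ‖w‖ ^ (α - 2) * (s * Real.cos (π * α / 2))⁻¹ := by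
        gcongr
        · exact norm_stableSymbol_le_one hα hs.le hw.le
        · exact norm_rpow_mul_norm_stableSymbol_le hα hs hw.le
    _ = _ := by ring

lemma integrable_deriv_stableSymbol_vertical (hα : α ∈ Ioo (0 : ℝ) 1) (hs : 0 < s) {x : ℝ}
    (hx : 0 < x) : Integrable fun τ : ℝ ↦ deriv (stableSymbol α s) (x + τ * I) := by
  have hre (τ : ℝ) : 0 < (x + τ * I : ℂ).re := by simpa using hx
  have norm_cpow_le (τ : ℝ) : ‖-(s * α : ℂ) * (x + τ * I) ^ ((α - 1 : ℝ) : ℂ)‖ ≤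
      s * α * x ^ (α - 1) := by
    have hxw : x ≤ ‖(x + τ * I : ℂ)‖ := by simpa using Complex.re_le_norm (x + τ * I)
    rw [norm_mul, norm_neg, norm_mul, Complex.norm_cpow_real, Complex.norm_of_nonneg hs.le,
      Complex.norm_of_nonneg hα.1.le]
    exact mul_le_mul_of_nonneg_left
      (Real.rpow_le_rpow_of_nonpos hx hxw (sub_nonpos.2 hα.2.le)) (mul_nonneg hs.le hα.1.le)
  simp only [fun τ : ℝ ↦ (hasDerivAt_stableSymbol α s (hre τ)).deriv]
  exact ((verticallyDominated_stableSymbol hα hs).integrable_vertical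
    (by simpa using hx.le)).bdd_mul (Measurable.aestronglyMeasurable (by fun_prop))
      (.of_forall norm_cpow_le)

end StableSymbol

theorem stmt15_general (α s : ℝ) (hα : α ∈ Ioo (0 : ℝ) 1) (hs : 0 < s) (ζ : ℂ) (hζ : 0 ≤ ζ.re) :
    Integrable (fun z : ℝ ↦ Complex.exp (-ζ * z) * hstable α s z) ∧
    ∫ z : ℝ, Complex.exp (-ζ * z) * hstable α s z = Complex.exp (-s * ζ ^ (α : ℂ)) := by
  have hdom := verticallyDominated_stableSymbol hα hs
  have hint : Integrable fun z : ℝ ↦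
      Complex.exp (-ζ * z) • bromwichIntegral (stableSymbol α s) 0 z :=
    hdom.integrable_cexp_neg_mul_smul_bromwichIntegral
      (p := 2 - α) ⟨by linarith [hα.2], by linarith [hα.1]⟩
      (fun _ hx ↦ integrable_deriv_stableSymbol_vertical hα hs hx)
      (fun _ hw ↦ norm_deriv_deriv_stableSymbol_le hα hs hw) hζ
  have heq (z : ℝ) : Complex.exp (-ζ * z) * hstable α s z =
      (2 * π)⁻¹ • (Complex.exp (-ζ * z) • bromwichIntegral (stableSymbol α s) 0 z) := by
    rw [hstable_eq_bromwichIntegral, Complex.real_smul, smul_eq_mul]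
    ring
  simp only [heq]
  refine ⟨hint.fun_smul _, ?_⟩
  rw [integral_smul, hdom.integral_cexp_neg_mul_smul_bromwichIntegral hζ hint,
    inv_smul_smul₀ Real.two_pi_pos.ne', stableSymbol]

/-- Laplace transform of the density of the stable subordinator:
`∫_ℝ e^{−ξz} h_α(z,s) dz = e^{−sξ^α}`. -/
theorem stmt15 (α s ξ : ℝ) (hα : α ∈ Set.Ioo (0 : ℝ) 1) (hs : 0 < s) (hξ : 0 ≤ ξ) :
    Integrable (fun z : ℝ => ((Real.exp (-ξ * z) : ℝ) : ℂ) * hstable α s z) ∧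
    ∫ z : ℝ, ((Real.exp (-ξ * z) : ℝ) : ℂ) * hstable α s z =
      ((Real.exp (-s * ξ ^ α) : ℝ) : ℂ) := by
  simpa [Complex.ofReal_cpow hξ] using stmt15_general α s hα hs ξ (by simpa using hξ)
end
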